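/- For all real numbers u, v with 0 < v ≤ u ≤ 1 and all τ ∈ [0,1], |u^τ − v^τ − τ·(u − v)| ≤ τ·(1−τ)·((u^{τ−2}/2)·(1−u)² + (v^{τ−2}/2)·(1−v)²). -/

import Mathlib

/-!
For `0 ≤ p ≤ 1` the tangent line to `t ↦ t ^ p` at `c` lies above the graph; let `G x` be the gap
at `x`. The tangent has slope `p * c ^ (p - 1)`, so
`u ^ p - v ^ p - p * c ^ (p - 1) * (u - v) = G v - G u`,
which in absolute value is at most the larger of `G u` and `G v`. By Taylor's theorem,
`G x = p * (1 - p) * (ξ ^ (p - 2) / 2 * (c - x) ^ 2)` for some `ξ` between `x` and `c`, and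
`ξ ^ (p - 2) ≤ x ^ (p - 2)` when `x ≤ c`.
-/

open Set

theorem exists_rpow_eq_tangent_add_remainder {c x : ℝ} (p : ℝ) (hc : 0 < c) (hx : 0 < x)
    (hcx : c ≠ x) :
    ∃ ξ ∈ uIoo c x,
      x ^ p = c ^ p + p * c ^ (p - 1) * (x - c) + p * (p - 1) / 2 * ξ ^ (p - 2) * (x - c) ^ 2 := by
  have contDiffAt_rpow : ∀ y ∈ uIcc c x, ContDiffAt ℝ 2 (fun t : ℝ ↦ t ^ p) y := fun y hy ↦
    Real.contDiffAt_rpow_const_of_ne ((lt_min hc hx).trans_le hy.1).ne'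
  obtain ⟨ξ, hξ, hTaylor⟩ := taylor_mean_remainder_lagrange_iteratedDeriv (n := 1) hcx
    fun y hy ↦ (contDiffAt_rpow y hy).contDiffWithinAt
  have first_deriv : iteratedDerivWithin 1 (fun t : ℝ ↦ t ^ p) (uIcc c x) c = p * c ^ (p - 1) := by
    rw [iteratedDerivWithin_eq_iteratedDeriv (uniqueDiffOn_uIcc hcx)
      ((contDiffAt_rpow c left_mem_uIcc).of_le one_le_two) left_mem_uIcc, iteratedDeriv_one,
      Real.deriv_rpow_const]
  have second_deriv : iteratedDeriv 2 (fun t : ℝ ↦ t ^ p) ξ = p * (p - 1) * ξ ^ (p - 2) := by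
    rw [iteratedDeriv_eq_iterate, Real.iter_deriv_rpow_const]
    simp [descPochhammer_succ_right]
  refine ⟨ξ, hξ, ?_⟩
  simp only [taylorWithinEval_succ, taylor_within_zero_eval, Nat.reduceAdd, zero_add, first_deriv,
    second_deriv, smul_eq_mul, Nat.cast_zero, Nat.factorial, Nat.cast_one, mul_one, inv_one,
    one_mul, pow_one] at hTaylor
  push_cast at hTaylor
  linarith

theorem tangent_sub_rpow_mem_Icc {c x p : ℝ} (hx : 0 < x) (hxc : x ≤ c) (hp : p ∈ Icc 0 1) :
    c ^ p + p * c ^ (p - 1) * (x - c) - x ^ p ∈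
      Icc 0 (p * (1 - p) * (x ^ (p - 2) / 2 * (c - x) ^ 2)) := by
  obtain ⟨hp0, hp1⟩ := hp
  obtain rfl | hlt := hxc.eq_or_lt
  · simp
  obtain ⟨ξ, hξ, hTaylor⟩ := exists_rpow_eq_tangent_add_remainder p (hx.trans hlt) hx hlt.ne'
  rw [uIoo_of_gt hlt] at hξ
  have gap_eq : c ^ p + p * c ^ (p - 1) * (x - c) - x ^ p =
      p * (1 - p) * (ξ ^ (p - 2) / 2 * (c - x) ^ 2) := by
    rw [hTaylor]; ring
  have hcoeff : 0 ≤ p * (1 - p) := mul_nonneg hp0 (sub_nonneg.2 hp1)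
  have hξ0 : 0 < ξ := hx.trans hξ.1
  have rpow_le : ξ ^ (p - 2) ≤ x ^ (p - 2) :=
    Real.rpow_le_rpow_of_nonpos hx hξ.1.le (by linarith)
  rw [gap_eq]
  exact ⟨mul_nonneg hcoeff (by positivity), mul_le_mul_of_nonneg_left (by gcongr) hcoeff⟩

theorem abs_rpow_sub_rpow_sub_le_general {c u v p : ℝ} (hu : u ∈ Ioc 0 c) (hv : v ∈ Ioc 0 c)
    (hp : p ∈ Icc 0 1) :
    |u ^ p - v ^ p - p * c ^ (p - 1) * (u - v)| ≤
      p * (1 - p) * max (u ^ (p - 2) / 2 * (c - u) ^ 2) (v ^ (p - 2) / 2 * (c - v) ^ 2) := by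
  have hcoeff : 0 ≤ p * (1 - p) := mul_nonneg hp.1 (sub_nonneg.2 hp.2)
  obtain ⟨gap_u_nonneg, gap_u_le⟩ := tangent_sub_rpow_mem_Icc hu.1 hu.2 hp
  obtain ⟨gap_v_nonneg, gap_v_le⟩ := tangent_sub_rpow_mem_Icc hv.1 hv.2 hp
  calc |u ^ p - v ^ p - p * c ^ (p - 1) * (u - v)|
      = |(c ^ p + p * c ^ (p - 1) * (v - c) - v ^ p) -
          (c ^ p + p * c ^ (p - 1) * (u - c) - u ^ p)| := by ring_nf
    _ ≤ _ := abs_sub_le_of_nonneg_of_le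
        gap_v_nonneg (gap_v_le.trans (mul_le_mul_of_nonneg_left (le_max_right _ _) hcoeff))
        gap_u_nonneg (gap_u_le.trans (mul_le_mul_of_nonneg_left (le_max_left _ _) hcoeff))

/-- Taylor-type estimate: for `0 < v ≤ u ≤ 1` and `τ ∈ [0,1]`,
`|u^τ − v^τ − τ(u−v)| ≤ τ(1−τ)((u^{τ−2}/2)(1−u)² + (v^{τ−2}/2)(1−v)²)`. -/
theorem abs_rpow_sub_rpow_sub_le (u v τ : ℝ) (hv : 0 < v) (hvu : v ≤ u) (hu : u ≤ 1)
    (hτ0 : 0 ≤ τ) (hτ1 : τ ≤ 1) :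
    |u ^ τ - v ^ τ - τ * (u - v)|
      ≤ τ * (1 - τ) * (u ^ (τ - 2) / 2 * (1 - u) ^ 2 + v ^ (τ - 2) / 2 * (1 - v) ^ 2) := by
  have hu0 : 0 < u := hv.trans_le hvu
  have hcoeff : 0 ≤ τ * (1 - τ) := mul_nonneg hτ0 (sub_nonneg.2 hτ1)
  have hmax := abs_rpow_sub_rpow_sub_le_general ⟨hu0, hu⟩ ⟨hv, hvu.trans hu⟩ ⟨hτ0, hτ1⟩
  rw [Real.one_rpow, mul_one] at hmax
  exact hmax.trans <| mul_le_mul_of_nonneg_left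
    (max_le_add_of_nonneg (by positivity) (by positivity)) hcoeff
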